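/- Fix an integer N ≥ 2, t ∈ [0,1] and n ≥ 1, and assume ε_{N,n+1} < 1. Then ψ_{ρ^t_N}(n) ≤ (ε_{N,n} + ε_{N,n+1})/(1 − ε_{N,n+1}). -/

import Mathlib

open MeasureTheory Set Real Filter

/-- The Rényi-type continued fraction map `R_N`. -/
noncomputable def RN (N : ℕ) (x : ℝ) : ℝ :=
  if x = 1 then 0 else (N : ℝ) / (1 - x) - ⌊(N : ℝ) / (1 - x)⌋

/-- `digit N k x` is the `(k+1)`-st digit `a_{k+1}(x)`. -/
noncomputable def digit (N k : ℕ) (x : ℝ) : ℤ :=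
  ⌊(N : ℝ) / (1 - (RN N)^[k] x)⌋

/-- The conditional probability measure `ρ^t_N`, with density
`N(N-1+t)/[N-(1-x)(1-t)]²` on `[0,1]`. -/
noncomputable def rhoT (N : ℕ) (t : ℝ) : Measure ℝ :=
  (volume.restrict (Set.Icc (0 : ℝ) 1)).withDensity fun x =>
    ENNReal.ofReal ((N : ℝ) * ((N : ℝ) - 1 + t) / ((N : ℝ) - (1 - x) * (1 - t)) ^ 2)

/-- The invariant probability measure `ρ_N`, with density
`(log(N/(N-1)))⁻¹/(x+N-1)` on `[0,1]`. -/
noncomputable def rhoN (N : ℕ) : Measure ℝ :=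
  (volume.restrict (Set.Icc (0 : ℝ) 1)).withDensity fun x =>
    ENNReal.ofReal ((Real.log ((N : ℝ) / ((N : ℝ) - 1)))⁻¹ / (x + (N : ℝ) - 1))

/-- `ε_{N,n}`. -/
noncomputable def eps (N n : ℕ) : ℝ :=
  sSup {r : ℝ | ∃ t ∈ Set.Icc (0 : ℝ) 1, ∃ C : Set ℝ, MeasurableSet C ∧
    0 < (rhoN N ((RN N)^[n - 1] ⁻¹' C)).toReal ∧
    r = |(rhoT N t ((RN N)^[n - 1] ⁻¹' C)).toReal
          / (rhoN N ((RN N)^[n - 1] ⁻¹' C)).toReal - 1|}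

/-- The ψ-mixing coefficient `ψ_μ(n)` of the digit sequence under `μ`. -/
noncomputable def psi (N : ℕ) (μ : Measure ℝ) (n : ℕ) : ℝ :=
  sSup {r : ℝ | ∃ k : ℕ, 1 ≤ k ∧ ∃ A B : Set ℝ,
    (∃ S : Set (Fin k → ℤ),
      A = {y | y ∈ Set.Icc (0 : ℝ) 1 ∧ Irrational y ∧ (fun j : Fin k => digit N j y) ∈ S}) ∧
    (∃ C : Set ℝ, MeasurableSet C ∧ B = (RN N)^[k + n - 1] ⁻¹' C) ∧
    (μ A).toReal * (μ B).toReal ≠ 0 ∧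
    r = |(μ (A ∩ B)).toReal / ((μ A).toReal * (μ B).toReal) - 1|}

/-!
Each inverse branch `y ↦ 1 - N / (i + y)` of `R_N` is a Möbius map which, up to a constant factor,
transports the density of `ρ^t_N` to that of `ρ^s_N` with `s = 1 - N / (i + t)` (the
Brodén–Borel–Lévy formula). Hence, under `ρ^t_N` and conditionally on the first `k` digits,
`R_N^k` has distribution `ρ^s_N` for some `s ∈ [0,1]` depending on these digits. Consequently, if
`A` depends on the first `k` digits and `B` on the digits of index at least `k + n`, then
`ρ^t_N(A ∩ B)` differs from `ρ^t_N(A) ρ_N(B)` by at most `ε_{N,n} ρ^t_N(A) ρ_N(B)`; here the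
invariance of `ρ_N` under `R_N` is used. Since `B` also lies in the `σ`-algebra generated by the
digits of index at least `n + 1`, `ρ_N(B)` may be replaced by `ρ^t_N(B)` at relative cost
`ε_{N,n+1}`.
-/

section

open scoped Function

lemma abs_div_mul_sub_one_le {a b d e f x : ℝ} (ha : 0 < a) (hb : 0 < b) (hd : 0 ≤ d) (hf : f < 1)
    (hx : |x - a * d| ≤ a * (e * d)) (hbd : |b - d| ≤ f * d) :
    |x / (a * b) - 1| ≤ (e + f) / (1 - f) := by
  have hd_pos : 0 < d := by
    refine hd.lt_of_ne' fun h => hb.ne' ?_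
    simpa [h] using hbd
  have he : 0 ≤ e * d := nonneg_of_mul_nonneg_right ((abs_nonneg _).trans hx) ha
  have hsum : 0 ≤ e + f := by
    have hf_mul : 0 ≤ f * d := (abs_nonneg _).trans hbd
    exact nonneg_of_mul_nonneg_left (by linarith : 0 ≤ (e + f) * d) hd_pos
  have hdb : d * (1 - f) ≤ b := by linarith [(abs_le.1 hbd).1]
  have hxb : |x - a * b| ≤ a * ((e + f) * d) :=
    calc |x - a * b| ≤ |x - a * d| + |a * d - a * b| := abs_sub_le _ _ _
      _ = |x - a * d| + a * |b - d| := by rw [← mul_sub, abs_mul, abs_of_pos ha, abs_sub_comm d b]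
      _ ≤ a * (e * d) + a * (f * d) := by gcongr
      _ = a * ((e + f) * d) := by ring
  have hab : 0 < a * b := mul_pos ha hb
  rw [div_sub_one hab.ne', abs_div, abs_of_pos hab, div_le_div_iff₀ hab (sub_pos.2 hf)]
  calc |x - a * b| * (1 - f) ≤ a * ((e + f) * d) * (1 - f) := by
        gcongr
    _ = (e + f) * (a * (d * (1 - f))) := by ring
    _ ≤ (e + f) * (a * b) := by gcongr

lemma hasSum_div_add_mul_add_add_one {a : ℝ} (ha : 0 < a) (c : ℝ) :
    HasSum (fun m : ℕ => c / ((a + m) * (a + m + 1))) (c / a) := by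
  have hunit : HasSum (fun m : ℕ => 1 / ((a + m) * (a + m + 1))) (1 / a) := by
    rw [hasSum_iff_tendsto_nat_of_nonneg fun m => by positivity]
    have hpartial (n : ℕ) :
        ∑ m ∈ Finset.range n, 1 / ((a + m) * (a + m + 1)) = 1 / a - 1 / (a + n) := by
      have h := Finset.sum_range_sub' (fun m : ℕ => 1 / (a + m)) n
      rw [Nat.cast_zero, add_zero] at h
      rw [← h]
      refine Finset.sum_congr rfl fun m _ => ?_
      push_cast
      field_simp
      ring
    have hlim : Tendsto (fun n : ℕ => 1 / (a + n)) atTop (nhds 0) :=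
      tendsto_const_nhds.div_atTop (tendsto_atTop_add_const_left _ _ tendsto_natCast_atTop_atTop)
    simpa only [hpartial, sub_zero] using hlim.const_sub (1 / a)
  simpa only [mul_one_div] using hunit.mul_left c

section Measure

variable {α ι : Type*} [MeasurableSpace α] [Countable ι] {μ : Measure α} [IsFiniteMeasure μ]
  {U : ι → Set α}

lemma hasSum_measureReal_iUnion (hU : ∀ i, MeasurableSet (U i)) (hd : Pairwise (Disjoint on U)) :
    HasSum (fun i => μ.real (U i)) (μ.real (⋃ i, U i)) := by
  have hsum : ∑' i, μ (U i) = μ (⋃ i, U i) := (measure_iUnion hd hU).symm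
  have h := ENNReal.hasSum_toReal (hsum.trans_ne (measure_ne_top μ _))
  rwa [← ENNReal.tsum_toReal_eq fun i => measure_ne_top μ (U i), hsum] at h

lemma abs_measureReal_iUnion_inter_sub_le (hU : ∀ i, MeasurableSet (U i))
    (hd : Pairwise (Disjoint on U)) {B : Set α} {c δ : ℝ}
    (h : ∀ i, |μ.real (U i ∩ B) - μ.real (U i) * c| ≤ μ.real (U i) * δ) :
    |μ.real ((⋃ i, U i) ∩ B) - μ.real (⋃ i, U i) * c| ≤ μ.real (⋃ i, U i) * δ := by
  have hinter : HasSum (fun i => μ.real (U i ∩ B)) (μ.real ((⋃ i, U i) ∩ B)) := by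
    simpa only [measureReal_restrict_apply (hU _), measureReal_restrict_apply (.iUnion hU)]
      using hasSum_measureReal_iUnion (μ := μ.restrict B) hU hd
  have hunion := hasSum_measureReal_iUnion (μ := μ) hU hd
  exact (hinter.sub (hunion.mul_right c)).norm_le_of_bounded (hunion.mul_right δ) h

end Measure

lemma withDensity_restrict_Icc_apply {a b : ℝ} (g : ℝ → ENNReal) {E : Set ℝ}
    (hE : MeasurableSet E) :
    (volume.restrict (Icc a b)).withDensity g E = ∫⁻ x in Ico a b ∩ E, g x := by
  rw [withDensity_apply _ hE, ← restrict_Ico_eq_restrict_Icc, Measure.restrict_restrict hE,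
    inter_comm]

variable {N k : ℕ} {i : ℤ} {s t x y : ℝ} {C E : Set ℝ}

/-! ### The map `R_N` and its inverse branches -/

-- At `x = 1` the convention `N / 0 = 0` agrees with `R_N(1) = 0`.
lemma RN_eq_fract (N : ℕ) (x : ℝ) : RN N x = Int.fract ((N : ℝ) / (1 - x)) := by
  by_cases hx : x = 1
  · simp [RN, hx]
  · rw [RN, if_neg hx, Int.fract]

lemma RN_mem_Ico (N : ℕ) (x : ℝ) : RN N x ∈ Ico (0 : ℝ) 1 := by
  rw [RN_eq_fract]
  exact ⟨Int.fract_nonneg _, Int.fract_lt_one _⟩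

lemma measurable_RN (N : ℕ) : Measurable (RN N) := by
  rw [funext (RN_eq_fract N)]
  fun_prop

lemma measurable_digit (N k : ℕ) : Measurable (digit N k) :=
  (measurable_const.div (measurable_const.sub ((measurable_RN N).iterate k))).floor

lemma digit_succ (N k : ℕ) (x : ℝ) : digit N (k + 1) x = digit N k (RN N x) := by
  rw [digit, digit, Function.iterate_succ_apply]

lemma digit_zero_add_RN (N : ℕ) (x : ℝ) : digit N 0 x + RN N x = (N : ℝ) / (1 - x) := by
  rw [RN_eq_fract, digit, Function.iterate_zero_apply, Int.floor_add_fract]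

lemma le_digit_zero (hx : x ∈ Ico (0 : ℝ) 1) : (N : ℤ) ≤ digit N 0 x := by
  rw [digit, Function.iterate_zero_apply, Int.le_floor, Int.cast_natCast,
    le_div_iff₀ (sub_pos.2 hx.2)]
  exact mul_le_of_le_one_right N.cast_nonneg (by linarith [hx.1])

/-- The inverse branch `y ↦ 1 - N / (i + y)` of `R_N` onto the set of points with first digit
`i`. The same map sends the parameter `t` of `ρ^t_N` to the parameter describing the law of the
remaining digits once the first one is `i`. -/
noncomputable def invBranch (N : ℕ) (i : ℤ) (y : ℝ) : ℝ :=
  1 - (N : ℝ) / (i + y)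

lemma invBranch_mem_Icc (hi : (N : ℤ) ≤ i) (hy : 0 ≤ y) : invBranch N i y ∈ Icc (0 : ℝ) 1 := by
  have hi' : (N : ℝ) ≤ i := by exact_mod_cast hi
  have hN : (0 : ℝ) ≤ N := N.cast_nonneg
  have hle : (N : ℝ) / (i + y) ≤ 1 := div_le_one_of_le₀ (by linarith) (by linarith)
  have hnonneg : 0 ≤ (N : ℝ) / (i + y) := div_nonneg hN (by linarith)
  exact ⟨sub_nonneg.2 hle, sub_le_self _ hnonneg⟩

lemma invBranch_lt_one (hN : N ≠ 0) (hi : (N : ℤ) ≤ i) (hy : 0 ≤ y) : invBranch N i y < 1 := by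
  have hi' : (N : ℝ) ≤ i := by exact_mod_cast hi
  have hN' : (0 : ℝ) < N := by positivity
  exact sub_lt_self _ (div_pos hN' (by linarith))

lemma div_one_sub_invBranch (hN : N ≠ 0) (i : ℤ) (y : ℝ) :
    (N : ℝ) / (1 - invBranch N i y) = i + y := by
  rw [invBranch, sub_sub_cancel, div_div_cancel₀ (Nat.cast_ne_zero.2 hN)]

lemma invBranch_digit_RN (hN : N ≠ 0) (x : ℝ) : invBranch N (digit N 0 x) (RN N x) = x := by
  rw [invBranch, digit_zero_add_RN, div_div_cancel₀ (Nat.cast_ne_zero.2 hN), sub_sub_cancel]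

lemma RN_invBranch (hN : N ≠ 0) (i : ℤ) (hy : y ∈ Ico (0 : ℝ) 1) :
    RN N (invBranch N i y) = y := by
  rw [RN_eq_fract, div_one_sub_invBranch hN, Int.fract_intCast_add, Int.fract_eq_self.2 hy]

lemma digit_zero_invBranch (hN : N ≠ 0) (i : ℤ) (hy : y ∈ Ico (0 : ℝ) 1) :
    digit N 0 (invBranch N i y) = i := by
  rw [digit, Function.iterate_zero_apply, div_one_sub_invBranch hN, Int.floor_intCast_add,
    Int.floor_eq_zero_iff.2 hy, add_zero]

lemma injOn_invBranch (hN : N ≠ 0) (i : ℤ) : InjOn (invBranch N i) (Ico 0 1) :=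
  LeftInvOn.injOn fun _ hy => RN_invBranch hN i hy

lemma hasDerivAt_invBranch (hy : (i : ℝ) + y ≠ 0) :
    HasDerivAt (invBranch N i) ((N : ℝ) / (i + y) ^ 2) y := by
  have h := ((((hasDerivAt_id' y).const_add (i : ℝ)).fun_inv hy).const_mul (N : ℝ)).const_sub 1
  have h' := h.congr_deriv (g' := (N : ℝ) / (i + y) ^ 2) (by ring)
  simp only [← div_eq_mul_inv] at h'
  exact h'

/-- The cylinder of rank one: the points of `[0,1)` with first digit `i`. The endpoint `1`, whose
digits are junk values, is left out. -/
def digitCell (N : ℕ) (i : ℤ) : Set ℝ :=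
  {x | x ∈ Ico (0 : ℝ) 1 ∧ digit N 0 x = i}

lemma measurableSet_digitCell (N : ℕ) (i : ℤ) : MeasurableSet (digitCell N i) :=
  measurableSet_Ico.inter (measurable_digit N 0 (measurableSet_singleton i))

lemma digitCell_subset_Ico (N : ℕ) (i : ℤ) : digitCell N i ⊆ Ico 0 1 := fun _ hx => hx.1

lemma pairwise_disjoint_digitCell (N : ℕ) : Pairwise (Disjoint on digitCell N) :=
  fun _ _ hij => disjoint_left.2 fun _ hx hx' => hij (hx.2.symm.trans hx'.2)

lemma digitCell_eq_empty (hi : i < N) : digitCell N i = ∅ :=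
  eq_empty_of_forall_notMem fun _ hx => hi.not_ge (hx.2 ▸ le_digit_zero hx.1)

lemma iUnion_digitCell (N : ℕ) : ⋃ m : ℕ, digitCell N (N + m) = Ico 0 1 := by
  refine (iUnion_subset fun m => digitCell_subset_Ico N _).antisymm fun x hx => ?_
  obtain ⟨m, hm⟩ := Int.le.dest (le_digit_zero (N := N) hx)
  exact mem_iUnion.2 ⟨m, hx, hm.symm⟩

lemma image_invBranch_inter (hN : N ≠ 0) (hi : (N : ℤ) ≤ i) (E : Set ℝ) :
    invBranch N i '' (Ico 0 1 ∩ E) = digitCell N i ∩ RN N ⁻¹' E := by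
  ext x
  constructor
  · rintro ⟨y, ⟨hy, hyE⟩, rfl⟩
    refine ⟨⟨⟨(invBranch_mem_Icc hi hy.1).1, invBranch_lt_one hN hi hy.1⟩,
      digit_zero_invBranch hN i hy⟩, ?_⟩
    rwa [mem_preimage, RN_invBranch hN i hy]
  · rintro ⟨⟨-, rfl⟩, hxE⟩
    exact ⟨RN N x, ⟨RN_mem_Ico N x, hxE⟩, invBranch_digit_RN hN x⟩

lemma setLIntegral_digitCell_inter_preimage (hN : N ≠ 0) (hi : (N : ℤ) ≤ i)
    (hE : MeasurableSet E) (g : ℝ → ENNReal) :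
    ∫⁻ x in digitCell N i ∩ RN N ⁻¹' E, g x =
      ∫⁻ y in Ico 0 1 ∩ E, ENNReal.ofReal ((N : ℝ) / (i + y) ^ 2) * g (invBranch N i y) := by
  have hi' : (N : ℝ) ≤ i := by exact_mod_cast hi
  have hN' : (0 : ℝ) < N := by positivity
  have hIE : MeasurableSet (Ico 0 1 ∩ E) := measurableSet_Ico.inter hE
  have hderiv : ∀ y ∈ Ico 0 1 ∩ E,
      HasDerivWithinAt (invBranch N i) ((N : ℝ) / (i + y) ^ 2) (Ico 0 1 ∩ E) y := fun y hy =>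
    (hasDerivAt_invBranch (by linarith [hy.1.1])).hasDerivWithinAt
  rw [← image_invBranch_inter hN hi, lintegral_image_eq_lintegral_abs_deriv_mul hIE hderiv
    ((injOn_invBranch hN i).mono inter_subset_left)]
  refine setLIntegral_congr_fun hIE fun y _ => ?_
  rw [abs_of_nonneg (by positivity)]

lemma setLIntegral_preimage_RN (hN : N ≠ 0) (hE : MeasurableSet E) {g : ℝ → ENNReal}
    (hg : Measurable g) :
    ∫⁻ x in Ico 0 1 ∩ RN N ⁻¹' E, g x =
      ∫⁻ y in Ico 0 1 ∩ E, ∑' m : ℕ,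
        ENNReal.ofReal ((N : ℝ) / (((N + m : ℤ) : ℝ) + y) ^ 2) * g (invBranch N (N + m) y) := by
  have hdisj : Pairwise (Disjoint on fun m : ℕ => digitCell N (N + m) ∩ RN N ⁻¹' E) :=
    fun m m' hne => (pairwise_disjoint_digitCell N (by omega)).mono
      inter_subset_left inter_subset_left
  rw [← iUnion_digitCell N, iUnion_inter, lintegral_iUnion
    (fun m => (measurableSet_digitCell N _).inter (measurable_RN N hE)) hdisj, iUnion_digitCell,
    lintegral_tsum fun m => by unfold invBranch; fun_prop]
  exact tsum_congr fun m => setLIntegral_digitCell_inter_preimage hN (by omega) hE g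

/-! ### The densities of `ρ^t_N` and `ρ_N` -/

/-- The density of `ρ^t_N` on `[0,1]`. -/
noncomputable def rhoTDensity (N : ℕ) (t x : ℝ) : ℝ :=
  (N : ℝ) * ((N : ℝ) - 1 + t) / ((N : ℝ) - (1 - x) * (1 - t)) ^ 2

/-- The density of `ρ_N` on `[0,1]`. -/
noncomputable def rhoNDensity (N : ℕ) (x : ℝ) : ℝ :=
  (Real.log ((N : ℝ) / ((N : ℝ) - 1)))⁻¹ / (x + (N : ℝ) - 1)

lemma rhoT_eq_withDensity (N : ℕ) (t : ℝ) : rhoT N t =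
    (volume.restrict (Icc (0 : ℝ) 1)).withDensity fun x => ENNReal.ofReal (rhoTDensity N t x) :=
  rfl

lemma rhoN_eq_withDensity (N : ℕ) : rhoN N =
    (volume.restrict (Icc (0 : ℝ) 1)).withDensity fun x => ENNReal.ofReal (rhoNDensity N x) :=
  rfl

lemma rhoT_apply (hE : MeasurableSet E) :
    rhoT N t E = ∫⁻ x in Ico 0 1 ∩ E, ENNReal.ofReal (rhoTDensity N t x) :=
  withDensity_restrict_Icc_apply _ hE

lemma rhoT_Ico_inter (hE : MeasurableSet E) : rhoT N t (Ico 0 1 ∩ E) = rhoT N t E := by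
  rw [rhoT_apply (measurableSet_Ico.inter hE), rhoT_apply hE, ← inter_assoc, inter_self]

lemma rhoN_apply (hE : MeasurableSet E) :
    rhoN N E = ∫⁻ x in Ico 0 1 ∩ E, ENNReal.ofReal (rhoNDensity N x) :=
  withDensity_restrict_Icc_apply _ hE

lemma one_le_sub_one_sub_mul_one_sub (hN : 2 ≤ N) (ht : t ∈ Icc (0 : ℝ) 1)
    (hx : x ∈ Icc (0 : ℝ) 1) : 1 ≤ (N : ℝ) - (1 - x) * (1 - t) := by
  have hN' : (2 : ℝ) ≤ N := by exact_mod_cast hN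
  have hmul : (1 - x) * (1 - t) ≤ 1 :=
    mul_le_one₀ (by linarith [hx.1]) (by linarith [ht.2]) (by linarith [ht.1])
  linarith

lemma log_div_sub_one_pos (hN : 2 ≤ N) : 0 < Real.log ((N : ℝ) / ((N : ℝ) - 1)) := by
  have hN' : (2 : ℝ) ≤ N := by exact_mod_cast hN
  exact Real.log_pos ((one_lt_div (by linarith)).2 (by linarith))

lemma rhoTDensity_nonneg (hN : N ≠ 0) (ht : 0 ≤ t) (x : ℝ) : 0 ≤ rhoTDensity N t x := by
  have hN' : (1 : ℝ) ≤ N := by exact_mod_cast Nat.one_le_iff_ne_zero.2 hN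
  exact div_nonneg (mul_nonneg N.cast_nonneg (by linarith)) (sq_nonneg _)

lemma rhoNDensity_nonneg (hN : 2 ≤ N) (hx : 0 ≤ x) : 0 ≤ rhoNDensity N x := by
  have hN' : (2 : ℝ) ≤ N := by exact_mod_cast hN
  exact div_nonneg (inv_nonneg.2 (log_div_sub_one_pos hN).le) (by linarith)

lemma continuousOn_rhoTDensity (hN : 2 ≤ N) (ht : t ∈ Icc (0 : ℝ) 1) :
    ContinuousOn (rhoTDensity N t) (Icc 0 1) := by
  refine ContinuousOn.div (by fun_prop) (by fun_prop) fun x hx => ?_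
  have := one_le_sub_one_sub_mul_one_sub hN ht hx
  positivity

lemma continuousOn_rhoNDensity (hN : 2 ≤ N) : ContinuousOn (rhoNDensity N) (Icc 0 1) := by
  have hN' : (2 : ℝ) ≤ N := by exact_mod_cast hN
  refine ContinuousOn.div (by fun_prop) (by fun_prop) fun x hx => ?_
  linarith [hx.1]

lemma measurable_rhoNDensity (N : ℕ) : Measurable (rhoNDensity N) := by
  unfold rhoNDensity
  fun_prop

lemma hasDerivAt_rhoT_cdf (hN : 2 ≤ N) (ht : t ∈ Icc (0 : ℝ) 1) (hx : x ∈ Icc (0 : ℝ) 1) :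
    HasDerivAt (fun x => (N : ℝ) * x / ((N : ℝ) - (1 - x) * (1 - t))) (rhoTDensity N t x) x := by
  have hpos := one_le_sub_one_sub_mul_one_sub hN ht hx
  have hdenom : HasDerivAt (fun x : ℝ => (N : ℝ) - (1 - x) * (1 - t)) (1 - t) x :=
    ((((hasDerivAt_id' x).const_sub 1).mul_const (1 - t)).const_sub (N : ℝ)).congr_deriv (by ring)
  exact (((hasDerivAt_id' x).const_mul (N : ℝ)).fun_div hdenom (by linarith)).congr_deriv
    (by rw [rhoTDensity]; ring)

lemma isProbabilityMeasure_rhoT (hN : 2 ≤ N) (ht : t ∈ Icc (0 : ℝ) 1) :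
    IsProbabilityMeasure (rhoT N t) := by
  have hN0 : N ≠ 0 := by omega
  have hcont := continuousOn_rhoTDensity hN ht
  have hintegral : ∫ x in (0 : ℝ)..1, rhoTDensity N t x = 1 := by
    rw [← uIcc_of_le zero_le_one] at hcont
    rw [intervalIntegral.integral_eq_sub_of_hasDerivAt
      (fun x hx => hasDerivAt_rhoT_cdf hN ht (uIcc_of_le (zero_le_one' ℝ) ▸ hx))
      hcont.intervalIntegrable]
    simp [hN0]
  constructor
  rw [rhoT_eq_withDensity, withDensity_apply _ .univ, Measure.restrict_univ,
    ← ofReal_integral_eq_lintegral_ofReal hcont.integrableOn_Icc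
      (.of_forall fun x => rhoTDensity_nonneg hN0 ht.1 x),
    integral_Icc_eq_integral_Ioc, ← intervalIntegral.integral_of_le zero_le_one, hintegral,
    ENNReal.ofReal_one]

lemma isFiniteMeasure_rhoN (hN : 2 ≤ N) : IsFiniteMeasure (rhoN N) :=
  isFiniteMeasure_withDensity_ofReal (continuousOn_rhoNDensity hN).integrableOn_Icc.2

lemma rhoT_absolutelyContinuous (N : ℕ) (t : ℝ) : rhoT N t ≪ volume :=
  (withDensity_absolutelyContinuous _ _).trans Measure.restrict_le_self.absolutelyContinuous

lemma rhoTDensity_le_mul_rhoNDensity (hN : 2 ≤ N) (ht : t ∈ Icc (0 : ℝ) 1)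
    (hx : x ∈ Icc (0 : ℝ) 1) :
    rhoTDensity N t x ≤ N ^ 3 * Real.log ((N : ℝ) / ((N : ℝ) - 1)) * rhoNDensity N x := by
  have hN' : (2 : ℝ) ≤ N := by exact_mod_cast hN
  have hlog := log_div_sub_one_pos hN
  have hdenom := one_le_sub_one_sub_mul_one_sub hN ht hx
  have hx_pos : 0 < x + N - 1 := by linarith [hx.1]
  calc rhoTDensity N t x ≤ (N : ℝ) * (N - 1 + t) :=
        div_le_self (mul_nonneg (by linarith) (by linarith [ht.1])) (one_le_pow₀ hdenom)
    _ ≤ N * N := by gcongr; linarith [ht.2]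
    _ ≤ N * N * (N / (x + N - 1)) :=
        le_mul_of_one_le_right (by positivity) ((one_le_div hx_pos).2 (by linarith [hx.2]))
    _ = N ^ 3 * Real.log ((N : ℝ) / ((N : ℝ) - 1)) * rhoNDensity N x := by
        rw [rhoNDensity]
        field_simp

lemma rhoT_le_smul_rhoN (hN : 2 ≤ N) (ht : t ∈ Icc (0 : ℝ) 1) :
    rhoT N t ≤ ENNReal.ofReal (N ^ 3 * Real.log ((N : ℝ) / ((N : ℝ) - 1))) • rhoN N := by
  have hlog := log_div_sub_one_pos hN
  rw [rhoT_eq_withDensity, rhoN_eq_withDensity, ← withDensity_smul' _ _ ENNReal.ofReal_ne_top]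
  refine withDensity_mono ?_
  filter_upwards [ae_restrict_mem measurableSet_Icc] with x hx
  rw [Pi.smul_apply, smul_eq_mul, ← ENNReal.ofReal_mul (by positivity)]
  exact ENNReal.ofReal_le_ofReal (rhoTDensity_le_mul_rhoNDensity hN ht hx)

lemma rhoT_real_le_mul_rhoN_real (hN : 2 ≤ N) (ht : t ∈ Icc (0 : ℝ) 1) (E : Set ℝ) :
    (rhoT N t).real E ≤ N ^ 3 * Real.log ((N : ℝ) / ((N : ℝ) - 1)) * (rhoN N).real E := by
  have := isFiniteMeasure_rhoN hN
  have hlog := log_div_sub_one_pos hN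
  have hle : rhoT N t E ≤
      ENNReal.ofReal (N ^ 3 * Real.log ((N : ℝ) / ((N : ℝ) - 1))) * rhoN N E :=
    rhoT_le_smul_rhoN hN ht E
  have hreal := ENNReal.toReal_mono (by finiteness) hle
  rwa [ENNReal.toReal_mul, ENNReal.toReal_ofReal (by positivity)] at hreal

/-! ### Invariance of `ρ_N` -/

lemma deriv_mul_rhoNDensity_invBranch (hN : 2 ≤ N) (hi : (N : ℤ) ≤ i) (hy : 0 ≤ y) :
    (N : ℝ) / (i + y) ^ 2 * rhoNDensity N (invBranch N i y) =
      (Real.log ((N : ℝ) / ((N : ℝ) - 1)))⁻¹ / ((i + y - 1) * (i + y)) := by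
  have hN' : (2 : ℝ) ≤ N := by exact_mod_cast hN
  have hi' : (N : ℝ) ≤ i := by exact_mod_cast hi
  have hiy : 0 < (i : ℝ) + y := by linarith
  have hiy' : 0 < (i : ℝ) + y - 1 := by linarith
  have hshift : invBranch N i y + N - 1 = N * (i + y - 1) / (i + y) := by
    rw [invBranch]
    field_simp
    ring
  rw [rhoNDensity, hshift]
  field_simp

-- The density of `ρ_N` is a fixed point of the transfer operator of `R_N`.
lemma hasSum_deriv_mul_rhoNDensity_invBranch (hN : 2 ≤ N) (hy : 0 ≤ y) :
    HasSum (fun m : ℕ => (N : ℝ) / (((N + m : ℤ) : ℝ) + y) ^ 2 *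
      rhoNDensity N (invBranch N (N + m) y)) (rhoNDensity N y) := by
  have hN' : (2 : ℝ) ≤ N := by exact_mod_cast hN
  have hterm (m : ℕ) :
      (N : ℝ) / (((N + m : ℤ) : ℝ) + y) ^ 2 * rhoNDensity N (invBranch N (N + m) y) =
        (Real.log ((N : ℝ) / ((N : ℝ) - 1)))⁻¹ / ((y + N - 1 + m) * (y + N - 1 + m + 1)) := by
    rw [deriv_mul_rhoNDensity_invBranch hN (by omega) hy]
    push_cast
    congr 2 <;> ring
  simp only [hterm]
  exact hasSum_div_add_mul_add_add_one (by linarith) _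

lemma measurePreserving_RN (hN : 2 ≤ N) : MeasurePreserving (RN N) (rhoN N) (rhoN N) := by
  refine ⟨measurable_RN N, Measure.ext fun E hE => ?_⟩
  rw [Measure.map_apply (measurable_RN N) hE, rhoN_apply (measurable_RN N hE), rhoN_apply hE,
    setLIntegral_preimage_RN (by omega) hE (measurable_rhoNDensity N).ennreal_ofReal]
  refine setLIntegral_congr_fun (measurableSet_Ico.inter hE) fun y hy => ?_
  have hsum := hasSum_deriv_mul_rhoNDensity_invBranch hN hy.1.1
  have hnonneg (m : ℕ) : 0 ≤ (N : ℝ) / (((N + m : ℤ) : ℝ) + y) ^ 2 *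
      rhoNDensity N (invBranch N (N + m) y) :=
    mul_nonneg (by positivity) (rhoNDensity_nonneg hN (invBranch_mem_Icc (by omega) hy.1.1).1)
  rw [← hsum.tsum_eq, ENNReal.ofReal_tsum_of_nonneg hnonneg hsum.summable]
  exact tsum_congr fun m => (ENNReal.ofReal_mul (by positivity)).symm

/-! ### The law of `R_N^k` given the first `k` digits -/

lemma deriv_mul_rhoTDensity_invBranch (hN : 2 ≤ N) (hi : (N : ℤ) ≤ i) (ht : 0 ≤ t) (hy : 0 ≤ y) :
    (N : ℝ) / (i + y) ^ 2 * rhoTDensity N t (invBranch N i y) =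
      ((N : ℝ) - 1 + t) / ((i + t - 1) * (i + t)) * rhoTDensity N (invBranch N i t) y := by
  have hN' : (2 : ℝ) ≤ N := by exact_mod_cast hN
  have hi' : (N : ℝ) ≤ i := by exact_mod_cast hi
  have hit : 0 < (i : ℝ) + t := by linarith
  have hit' : 0 < (i : ℝ) + t - 1 := by linarith
  have hiy : 0 < (i : ℝ) + y := by linarith
  have hiyt : 0 < (i : ℝ) + y - 1 + t := by linarith
  have hdenom : (N : ℝ) - (1 - invBranch N i y) * (1 - t) = N * (i + y - 1 + t) / (i + y) := by
    rw [invBranch]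
    field_simp
    ring
  have hdenom' : (N : ℝ) - (1 - y) * (1 - invBranch N i t) = N * (i + y - 1 + t) / (i + t) := by
    rw [invBranch]
    field_simp
    ring
  have hnum : (N : ℝ) - 1 + invBranch N i t = N * (i + t - 1) / (i + t) := by
    rw [invBranch]
    field_simp
    ring
  rw [rhoTDensity, rhoTDensity, hdenom, hdenom', hnum]
  field_simp

lemma rhoT_digitCell_inter_preimage_eq_ofReal_mul (hN : 2 ≤ N) (hi : (N : ℤ) ≤ i) (ht : 0 ≤ t)
    (hE : MeasurableSet E) :
    rhoT N t (digitCell N i ∩ RN N ⁻¹' E) =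
      ENNReal.ofReal (((N : ℝ) - 1 + t) / ((i + t - 1) * (i + t))) *
        rhoT N (invBranch N i t) E := by
  have hN' : (2 : ℝ) ≤ N := by exact_mod_cast hN
  have hi' : (N : ℝ) ≤ i := by exact_mod_cast hi
  have hweight : 0 ≤ ((N : ℝ) - 1 + t) / ((i + t - 1) * (i + t)) :=
    div_nonneg (by linarith) (mul_nonneg (by linarith) (by linarith))
  have hcell : Ico 0 1 ∩ (digitCell N i ∩ RN N ⁻¹' E) = digitCell N i ∩ RN N ⁻¹' E :=
    inter_eq_right.2 (inter_subset_left.trans (digitCell_subset_Ico N i))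
  rw [rhoT_apply ((measurableSet_digitCell N i).inter (measurable_RN N hE)), hcell,
    setLIntegral_digitCell_inter_preimage (by omega) hi hE, rhoT_apply hE,
    ← lintegral_const_mul' _ _ ENNReal.ofReal_ne_top]
  refine setLIntegral_congr_fun (measurableSet_Ico.inter hE) fun y hy => ?_
  rw [← ENNReal.ofReal_mul (by positivity), ← ENNReal.ofReal_mul hweight,
    deriv_mul_rhoTDensity_invBranch hN hi ht hy.1.1]

lemma rhoT_digitCell_inter_preimage (hN : 2 ≤ N) (hi : (N : ℤ) ≤ i) (ht : 0 ≤ t)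
    (hE : MeasurableSet E) :
    rhoT N t (digitCell N i ∩ RN N ⁻¹' E) =
      rhoT N t (digitCell N i) * rhoT N (invBranch N i t) E := by
  have := isProbabilityMeasure_rhoT hN (invBranch_mem_Icc hi ht)
  have hcell := rhoT_digitCell_inter_preimage_eq_ofReal_mul hN hi ht MeasurableSet.univ
  rw [preimage_univ, inter_univ, measure_univ, mul_one] at hcell
  rw [hcell, rhoT_digitCell_inter_preimage_eq_ofReal_mul hN hi ht hE]

/-- The cylinder of rank `k`: the points of `[0,1)` whose first `k` digits form the word `w`. -/
def digitCylinder (N : ℕ) (w : Fin k → ℤ) : Set ℝ :=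
  {x | x ∈ Ico (0 : ℝ) 1 ∧ (fun j : Fin k => digit N j x) = w}

lemma measurableSet_digitCylinder (N : ℕ) (w : Fin k → ℤ) :
    MeasurableSet (digitCylinder N w) :=
  measurableSet_Ico.inter
    (measurable_pi_lambda _ (fun j : Fin k => measurable_digit N j) (measurableSet_singleton w))

lemma pairwise_disjoint_digitCylinder (N k : ℕ) :
    Pairwise (Disjoint on fun w : Fin k → ℤ => digitCylinder N w) :=
  fun _ _ hne => disjoint_left.2 fun _ hx hx' => hne (hx.2.symm.trans hx'.2)

lemma digitCylinder_zero (N : ℕ) (w : Fin 0 → ℤ) : digitCylinder N w = Ico 0 1 :=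
  ext fun _ => and_iff_left (Subsingleton.elim _ _)

lemma digitCylinder_succ (N : ℕ) (w : Fin (k + 1) → ℤ) :
    digitCylinder N w = digitCell N (w 0) ∩ RN N ⁻¹' digitCylinder N (Fin.tail w) := by
  ext x
  simp only [digitCylinder, digitCell, funext_iff, Fin.forall_fin_succ, Fin.val_zero, Fin.val_succ,
    digit_succ, Fin.tail, mem_inter_iff, mem_preimage, mem_ofPred_eq, RN_mem_Ico, true_and,
    and_assoc]

lemma exists_rhoT_digitCylinder_inter_preimage_eq_mul (hN : 2 ≤ N) (ht : t ∈ Icc (0 : ℝ) 1)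
    (w : Fin k → ℤ) :
    ∃ s ∈ Icc (0 : ℝ) 1, ∀ E, MeasurableSet E →
      rhoT N t (digitCylinder N w ∩ (RN N)^[k] ⁻¹' E) =
        rhoT N t (digitCylinder N w) * rhoT N s E := by
  induction k generalizing t with
  | zero =>
    have := isProbabilityMeasure_rhoT hN ht
    have hIco : rhoT N t (Ico 0 1) = 1 := by
      simpa only [inter_univ, measure_univ] using rhoT_Ico_inter (N := N) (t := t) .univ
    refine ⟨t, ht, fun E hE => ?_⟩
    rw [digitCylinder_zero, hIco, one_mul]
    exact rhoT_Ico_inter hE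
  | succ k ih =>
    rcases lt_or_ge (w 0) N with hlt | hi
    · refine ⟨t, ht, fun E _ => ?_⟩
      simp [digitCylinder_succ, digitCell_eq_empty hlt]
    · obtain ⟨s, hs, hind⟩ := ih (invBranch_mem_Icc hi ht.1) (Fin.tail w)
      refine ⟨s, hs, fun E hE => ?_⟩
      have htail := measurableSet_digitCylinder N (Fin.tail w)
      rw [digitCylinder_succ, Function.iterate_succ, preimage_comp, inter_assoc, ← preimage_inter,
        rhoT_digitCell_inter_preimage hN hi ht.1
          (htail.inter ((measurable_RN N).iterate k hE)),
        hind E hE, rhoT_digitCell_inter_preimage hN hi ht.1 htail, mul_assoc]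

/-! ### Mixing -/

lemma eps_nonneg (N n : ℕ) : 0 ≤ eps N n := by
  refine Real.sSup_nonneg ?_
  rintro _ ⟨t, -, C, -, -, rfl⟩
  exact abs_nonneg _

lemma abs_rhoT_real_sub_rhoN_real_le (hN : 2 ≤ N) (hs : s ∈ Icc (0 : ℝ) 1) (n : ℕ)
    (hC : MeasurableSet C) :
    |(rhoT N s).real ((RN N)^[n] ⁻¹' C) - (rhoN N).real ((RN N)^[n] ⁻¹' C)| ≤
      eps N (n + 1) * (rhoN N).real ((RN N)^[n] ⁻¹' C) := by
  rcases measureReal_nonneg.eq_or_lt' (a := (rhoN N).real ((RN N)^[n] ⁻¹' C)) with h0 | hpos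
  · have hle := rhoT_real_le_mul_rhoN_real hN hs ((RN N)^[n] ⁻¹' C)
    rw [h0, mul_zero] at hle
    simp [h0, hle.antisymm measureReal_nonneg]
  · rw [← div_le_iff₀ hpos, ← abs_of_pos hpos, ← abs_div, abs_of_pos hpos, sub_div,
      div_self hpos.ne']
    refine le_csSup ⟨N ^ 3 * Real.log ((N : ℝ) / ((N : ℝ) - 1)) + 1, ?_⟩
      ⟨s, hs, C, hC, hpos, rfl⟩
    rintro _ ⟨t, ht, D, -, hD, rfl⟩
    have hratio := (div_le_iff₀ hD).2 (rhoT_real_le_mul_rhoN_real hN ht ((RN N)^[n] ⁻¹' D))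
    have hnonneg : 0 ≤ (rhoT N t).real ((RN N)^[n] ⁻¹' D) / (rhoN N).real ((RN N)^[n] ⁻¹' D) := by
      positivity
    exact abs_le.2 ⟨by linarith!, by linarith!⟩

lemma abs_rhoT_real_digitCylinder_inter_sub_le (hN : 2 ≤ N) (ht : t ∈ Icc (0 : ℝ) 1)
    (w : Fin k → ℤ) (n : ℕ) (hC : MeasurableSet C) :
    |(rhoT N t).real (digitCylinder N w ∩ (RN N)^[n + k] ⁻¹' C) -
        (rhoT N t).real (digitCylinder N w) * (rhoN N).real ((RN N)^[n + k] ⁻¹' C)| ≤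
      (rhoT N t).real (digitCylinder N w) *
        (eps N (n + 1) * (rhoN N).real ((RN N)^[n + k] ⁻¹' C)) := by
  have hD : MeasurableSet ((RN N)^[n] ⁻¹' C) := (measurable_RN N).iterate n hC
  obtain ⟨s, hs, hind⟩ := exists_rhoT_digitCylinder_inter_preimage_eq_mul hN ht w
  have hinv : (rhoN N).real ((RN N)^[k] ⁻¹' ((RN N)^[n] ⁻¹' C)) =
      (rhoN N).real ((RN N)^[n] ⁻¹' C) :=
    ((measurePreserving_RN hN).iterate k).measureReal_preimage hD.nullMeasurableSet
  rw [Function.iterate_add, preimage_comp, hinv, measureReal_def, hind _ hD, ENNReal.toReal_mul,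
    ← measureReal_def, ← measureReal_def, ← mul_sub, abs_mul, abs_of_nonneg measureReal_nonneg]
  gcongr
  exact abs_rhoT_real_sub_rhoN_real_le hN hs n hC

lemma setOf_digit_mem_ae_eq_iUnion_digitCylinder (N : ℕ) (S : Set (Fin k → ℤ)) :
    {y | y ∈ Icc (0 : ℝ) 1 ∧ Irrational y ∧ (fun j : Fin k => digit N j y) ∈ S} =ᵐ[volume]
      ⋃ w : S, digitCylinder N w.1 := by
  filter_upwards [(countable_range ((↑) : ℚ → ℝ)).ae_notMem volume] with y (hy : Irrational y)
  refine propext ⟨fun ⟨hy01, _, hS⟩ => ?_, fun h => ?_⟩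
  · exact mem_iUnion.2 ⟨⟨_, hS⟩, ⟨hy01.1, hy01.2.lt_of_ne hy.ne_one⟩, rfl⟩
  · obtain ⟨⟨w, hw⟩, hyI, rfl⟩ := mem_iUnion.1 h
    exact ⟨Ico_subset_Icc_self hyI, hy, hw⟩

lemma abs_rhoT_real_inter_sub_mul_rhoN_real_le (hN : 2 ≤ N) (ht : t ∈ Icc (0 : ℝ) 1)
    {A : Set ℝ} {S : Set (Fin k → ℤ)}
    (hA : A = {y | y ∈ Icc (0 : ℝ) 1 ∧ Irrational y ∧ (fun j : Fin k => digit N j y) ∈ S})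
    (n : ℕ) (hC : MeasurableSet C) :
    |(rhoT N t).real (A ∩ (RN N)^[n + k] ⁻¹' C) -
        (rhoT N t).real A * (rhoN N).real ((RN N)^[n + k] ⁻¹' C)| ≤
      (rhoT N t).real A * (eps N (n + 1) * (rhoN N).real ((RN N)^[n + k] ⁻¹' C)) := by
  have := isProbabilityMeasure_rhoT hN ht
  have hae : A =ᵐ[rhoT N t] ⋃ w : S, digitCylinder N w.1 :=
    (rhoT_absolutelyContinuous N t).ae_eq
      (hA ▸ setOf_digit_mem_ae_eq_iUnion_digitCylinder N S)
  have hae_inter : (A ∩ (RN N)^[n + k] ⁻¹' C : Set ℝ) =ᵐ[rhoT N t]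
      ((⋃ w : S, digitCylinder N w.1) ∩ (RN N)^[n + k] ⁻¹' C : Set ℝ) :=
    ae_eq_set_inter hae (ae_eq_refl _)
  rw [measureReal_congr hae_inter, measureReal_congr hae]
  exact abs_measureReal_iUnion_inter_sub_le (U := fun w : S => digitCylinder N w.1)
    (fun w => measurableSet_digitCylinder N w.1)
    (fun v w hne => pairwise_disjoint_digitCylinder N k (Subtype.coe_injective.ne hne))
    fun w => abs_rhoT_real_digitCylinder_inter_sub_le hN ht w.1 n hC

end

theorem stmt18 (N : ℕ) (hN : 2 ≤ N) (t : ℝ) (ht : t ∈ Set.Icc (0 : ℝ) 1)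
    (n : ℕ) (hn : 1 ≤ n) (heps : eps N (n + 1) < 1) :
    psi N (rhoT N t) n ≤ (eps N n + eps N (n + 1)) / (1 - eps N (n + 1)) := by
  obtain ⟨m, rfl⟩ := Nat.exists_eq_add_of_le' hn
  refine Real.sSup_le ?_ (div_nonneg (add_nonneg (eps_nonneg _ _) (eps_nonneg _ _))
    (sub_pos.2 heps).le)
  rintro _ ⟨k, hk, A, B, ⟨S, hA⟩, ⟨C, hC, hB⟩, hAB, rfl⟩
  obtain ⟨l, rfl⟩ := Nat.exists_eq_add_of_le' hk
  have hB_mix : B = (RN N)^[m + (l + 1)] ⁻¹' C := by rw [hB]; congr 2; omega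
  have hB_tail : B = (RN N)^[m + 1] ⁻¹' ((RN N)^[l] ⁻¹' C) := by
    rw [hB_mix, ← preimage_comp, ← Function.iterate_add]; congr 2; omega
  have hmix := abs_rhoT_real_inter_sub_mul_rhoN_real_le hN ht hA m hC
  have htail := abs_rhoT_real_sub_rhoN_real_le hN ht (m + 1) ((measurable_RN N).iterate l hC)
  rw [← hB_mix] at hmix
  rw [← hB_tail] at htail
  exact abs_div_mul_sub_one_le (ENNReal.toReal_nonneg.lt_of_ne' (left_ne_zero_of_mul hAB))
    (ENNReal.toReal_nonneg.lt_of_ne' (right_ne_zero_of_mul hAB)) measureReal_nonneg heps hmix htail
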